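/- arXiv:1110.6585 — 2 statements merged into one kernel-verified Lean document; each statement's English description precedes it below -/
import Mathlib

section
/- Let Γ be an abelian group, E a Γ-graded division ring, δ̄ = (δ₁,…,δₙ) ∈ Γⁿ, and S = Mₙ(E)(δ̄). Then there exists a group homomorphism det_E : S_h* → E_h*/[E_h*,E_h*] such that whenever A ∈ S_h* has strict Bruhat normal form A = T·U·P_π·V with U = diag(u₁,…,uₙ), one has det_E(A) = sgn(π)·u₁⋯uₙ modulo [E_h*,E_h*]. -/
set_option maxHeartbeats 1000000

/-- The degree-`lam` homogeneous component of the matrix ring `Mₙ(E)(δ̄)` over a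
`Γ`-graded ring `E`, with the grading shifted by `δ̄`. -/
def MatrixGrade {Γ E : Type*} [AddCommGroup Γ] [Ring E] (𝒜 : Γ → AddSubgroup E)
    {ι : Type*} (δ : ι → Γ) (lam : Γ) : Set (Matrix ι ι E) :=
  {A | ∀ i j, A i j ∈ 𝒜 (lam + δ j - δ i)}

/-- Unipotent lower triangular matrix. -/
def UnipotentLower {R : Type*} [Zero R] [One R] {n : ℕ}
    (T : Matrix (Fin n) (Fin n) R) : Prop :=
  (∀ i j : Fin n, i < j → T i j = 0) ∧ ∀ i, T i i = 1

/-- Unipotent upper triangular matrix. -/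
def UnipotentUpper {R : Type*} [Zero R] [One R] {n : ℕ}
    (V : Matrix (Fin n) (Fin n) R) : Prop :=
  (∀ i j : Fin n, j < i → V i j = 0) ∧ ∀ i, V i i = 1

section UnipotentMatrices

variable {R : Type*} [Ring R] {n : ℕ}

theorem UnipotentLower.one : UnipotentLower (1 : Matrix (Fin n) (Fin n) R) :=
  ⟨fun _ _ h => Matrix.one_apply_ne h.ne, fun _ => Matrix.one_apply_eq _⟩

theorem UnipotentUpper.one : UnipotentUpper (1 : Matrix (Fin n) (Fin n) R) :=
  ⟨fun _ _ h => Matrix.one_apply_ne h.ne', fun _ => Matrix.one_apply_eq _⟩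

theorem UnipotentLower.mul {S T : Matrix (Fin n) (Fin n) R}
    (hS : UnipotentLower S) (hT : UnipotentLower T) : UnipotentLower (S * T) := by
  refine ⟨fun i j hij => ?_, fun i => ?_⟩
  · rw [Matrix.mul_apply]
    refine Finset.sum_eq_zero fun l _ => ?_
    rcases lt_or_ge i l with h | h
    · rw [hS.1 i l h, zero_mul]
    · rw [hT.1 l j (h.trans_lt hij), mul_zero]
  · rw [Matrix.mul_apply, Finset.sum_eq_single i, hS.2, hT.2, one_mul]
    · intro l _ hl
      rcases lt_or_gt_of_ne hl with h | h
      · rw [hT.1 l i h, mul_zero]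
      · rw [hS.1 i l h, zero_mul]
    · simp

theorem UnipotentLower.submatrix_rev {T : Matrix (Fin n) (Fin n) R} (hT : UnipotentLower T) :
    UnipotentUpper (T.submatrix Fin.revPerm Fin.revPerm) :=
  ⟨fun _ _ h => hT.1 _ _ (Fin.rev_lt_rev.2 h), fun _ => hT.2 _⟩

theorem UnipotentUpper.submatrix_rev {V : Matrix (Fin n) (Fin n) R} (hV : UnipotentUpper V) :
    UnipotentLower (V.submatrix Fin.revPerm Fin.revPerm) :=
  ⟨fun _ _ h => hV.1 _ _ (Fin.rev_lt_rev.2 h), fun _ => hV.2 _⟩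

theorem submatrix_revPerm_submatrix_revPerm {α : Type*} {n : ℕ} (M : Matrix (Fin n) (Fin n) α) :
    (M.submatrix Fin.revPerm Fin.revPerm).submatrix Fin.revPerm Fin.revPerm = M := by
  ext i j
  simp

theorem UnipotentUpper.mul {V W : Matrix (Fin n) (Fin n) R}
    (hV : UnipotentUpper V) (hW : UnipotentUpper W) : UnipotentUpper (V * W) := by
  have h := (hV.submatrix_rev.mul hW.submatrix_rev).submatrix_rev
  rwa [Matrix.submatrix_mul_equiv, submatrix_revPerm_submatrix_revPerm] at h

theorem one_add_single_mul_apply (p q : Fin n) (c : R) (M : Matrix (Fin n) (Fin n) R)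
    (i j : Fin n) :
    ((1 + Matrix.single p q c) * M) i j = M i j + if i = p then c * M q j else 0 := by
  rw [add_mul, one_mul, Matrix.add_apply]
  split_ifs with h
  · rw [h, Matrix.single_mul_apply_same]
  · rw [Matrix.single_mul_apply_of_ne _ _ _ _ _ h]

theorem diagonal_mul_submatrix_apply (u : Fin n → R) (π : Fin n → Fin n)
    (V : Matrix (Fin n) (Fin n) R) (i j : Fin n) :
    (Matrix.diagonal u * V.submatrix π id) i j = u i * V (π i) j := by
  rw [Matrix.diagonal_mul]
  rfl

theorem unipotentUpper_one_add_single {p q : Fin n} {c : R} (h : c = 0 ∨ p < q) :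
    UnipotentUpper (1 + Matrix.single p q c : Matrix (Fin n) (Fin n) R) := by
  rcases h with rfl | h
  · simpa using UnipotentUpper.one
  · refine ⟨fun i j hij => ?_, fun i => ?_⟩
    · rw [Matrix.add_apply, Matrix.one_apply_ne hij.ne', zero_add, Matrix.single_apply_of_ne]
      rintro ⟨rfl, rfl⟩
      exact hij.not_gt h
    · rw [Matrix.add_apply, Matrix.one_apply_eq, Matrix.single_apply_of_ne, add_zero]
      rintro ⟨rfl, rfl⟩
      exact h.false

theorem unipotentLower_one_add_single {p q : Fin n} {c : R} (h : q < p) :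
    UnipotentLower (1 + Matrix.single p q c : Matrix (Fin n) (Fin n) R) := by
  refine ⟨fun i j hij => ?_, fun i => ?_⟩
  · rw [Matrix.add_apply, Matrix.one_apply_ne hij.ne, zero_add, Matrix.single_apply_of_ne]
    rintro ⟨rfl, rfl⟩
    exact hij.not_gt h
  · rw [Matrix.add_apply, Matrix.one_apply_eq, Matrix.single_apply_of_ne, add_zero]
    rintro ⟨rfl, rfl⟩
    exact h.false

/-- A row operation on the left of `diag(u) P_π V` can be absorbed into `V` when it is
compatible with `π`. -/
theorem exists_one_add_single_mul_eq (u : Fin n → Rˣ) (π : Equiv.Perm (Fin n))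
    {V : Matrix (Fin n) (Fin n) R} (hV : UnipotentUpper V) {p q : Fin n} {c : R}
    (h : c = 0 ∨ π p < π q) :
    ∃ W : Matrix (Fin n) (Fin n) R, UnipotentUpper W ∧
      (1 + Matrix.single p q c) * (Matrix.diagonal (fun i => (u i : R)) * V.submatrix π id) =
        Matrix.diagonal (fun i => (u i : R)) * W.submatrix π id := by
  refine ⟨(1 + Matrix.single (π p) (π q) (↑(u p)⁻¹ * c * u q)) * V,
    (unipotentUpper_one_add_single (h.imp_left fun h => by simp [h])).mul hV, ?_⟩
  ext i j
  rw [one_add_single_mul_apply, diagonal_mul_submatrix_apply, diagonal_mul_submatrix_apply,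
    diagonal_mul_submatrix_apply, one_add_single_mul_apply, mul_add]
  by_cases hi : i = p
  · subst hi
    simp [mul_assoc]
  · simp [hi]

theorem UnipotentLower.one_sub_pow_apply_eq_zero {T : Matrix (Fin n) (Fin n) R}
    (hT : UnipotentLower T) (k : ℕ) (i j : Fin n) (h : (i : ℕ) < j + k) :
    ((1 - T) ^ k) i j = 0 := by
  induction k generalizing i j with
  | zero => exact Matrix.one_apply_ne (by rintro rfl; omega)
  | succ k ih =>
    rw [pow_succ, Matrix.mul_apply]
    refine Finset.sum_eq_zero fun l _ => ?_
    rcases lt_trichotomy l j with hl | rfl | hl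
    · rw [Matrix.sub_apply, Matrix.one_apply_ne hl.ne, hT.1 l j hl, sub_zero, mul_zero]
    · rw [Matrix.sub_apply, Matrix.one_apply_eq, hT.2, sub_self, mul_zero]
    · rw [ih i l (by have : (j : ℕ) < l := hl; omega), zero_mul]

theorem UnipotentLower.exists_inverse {T : Matrix (Fin n) (Fin n) R} (hT : UnipotentLower T) :
    ∃ S : Matrix (Fin n) (Fin n) R, UnipotentLower S ∧ T * S = 1 ∧ S * T = 1 ∧
      S = ∑ k ∈ Finset.range n, (1 - T) ^ k := by
  have hz : (1 - T) ^ n = 0 := by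
    ext i j
    exact hT.one_sub_pow_apply_eq_zero n i j (by omega)
  have h₁ := mul_neg_geom_sum (1 - T) n
  have h₂ := geom_sum_mul_neg (1 - T) n
  rw [sub_sub_cancel, hz, sub_zero] at h₁ h₂
  refine ⟨_, ⟨fun i j hij => ?_, fun i => ?_⟩, h₁, h₂, rfl⟩
  · rw [Matrix.sum_apply]
    refine Finset.sum_eq_zero fun k _ => hT.one_sub_pow_apply_eq_zero k i j ?_
    have : (i : ℕ) < j := hij
    omega
  · rw [Matrix.sum_apply, Finset.sum_eq_single 0]
    · simp
    · intro k _ hk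
      exact hT.one_sub_pow_apply_eq_zero k i i (by omega)
    · intro h
      exact absurd (Finset.mem_range.2 (by have := i.2; omega)) h

theorem Fin.perm_eq_one_of_apply_le (τ : Equiv.Perm (Fin n)) (h : ∀ i, τ i ≤ i) : τ = 1 := by
  have key := (Finset.sum_eq_sum_iff_of_le (s := Finset.univ) (f := fun i => (τ i : ℕ))
    (g := fun i : Fin n => (i : ℕ)) fun i _ => h i).1 (Equiv.sum_comp τ fun i : Fin n => (i : ℕ))
  exact Equiv.ext fun i => Fin.ext (key i (Finset.mem_univ i))

theorem UnipotentUpper.exists_inverse {V : Matrix (Fin n) (Fin n) R} (hV : UnipotentUpper V) :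
    ∃ W : Matrix (Fin n) (Fin n) R, UnipotentUpper W ∧ V * W = 1 ∧ W * V = 1 := by
  obtain ⟨S, hS, h₁, h₂, -⟩ := hV.submatrix_rev.exists_inverse
  have e := submatrix_revPerm_submatrix_revPerm V
  refine ⟨_, hS.submatrix_rev, ?_, ?_⟩
  · conv_lhs => rw [← e]
    rw [Matrix.submatrix_mul_equiv, h₁, Matrix.submatrix_one_equiv]
  · conv_lhs => rw [← e]
    rw [Matrix.submatrix_mul_equiv, h₂, Matrix.submatrix_one_equiv]

/-- Uniqueness of the diagonal part and the permutation in the Bruhat decomposition. -/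
theorem bruhat_unique {T T' V V' : Matrix (Fin n) (Fin n) R} {u u' : Fin n → R}
    {π σ : Equiv.Perm (Fin n)} (hT : UnipotentLower T) (hT' : UnipotentLower T')
    (hV : UnipotentUpper V) (hV' : UnipotentUpper V') (hu' : ∀ i, u' i ≠ 0)
    (h : T * (Matrix.diagonal u * V.submatrix π id) =
      T' * (Matrix.diagonal u' * V'.submatrix σ id)) :
    π = σ ∧ u = u' := by
  obtain ⟨S, hS, -, hST, -⟩ := hT'.exists_inverse
  obtain ⟨W, hW, hVW, -⟩ := hV.exists_inverse
  have key : (S * T) * (Matrix.diagonal u * (1 : Matrix (Fin n) (Fin n) R).submatrix π id) =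
      Matrix.diagonal u' * (V' * W).submatrix σ id := by
    have e₁ : (1 : Matrix (Fin n) (Fin n) R).submatrix π id = V.submatrix π id * W := by
      rw [← hVW]; rfl
    have e₂ : (V' * W).submatrix σ id = V'.submatrix σ id * W := rfl
    rw [e₁, e₂, ← Matrix.mul_assoc _ _ W, ← Matrix.mul_assoc _ _ W, ← Matrix.mul_assoc _ _ W,
      Matrix.mul_assoc S, h, ← Matrix.mul_assoc S, hST, one_mul]
  have hL := hS.mul hT
  have entry : ∀ i, (S * T) i (π.symm (σ i)) * u (π.symm (σ i)) = u' i := by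
    intro i
    have hi := congrFun (congrFun key i) (σ i)
    rw [diagonal_mul_submatrix_apply, (hV'.mul hW).2, mul_one, Matrix.mul_apply,
      Finset.sum_eq_single (π.symm (σ i))] at hi
    · rwa [diagonal_mul_submatrix_apply, Equiv.apply_symm_apply, Matrix.one_apply_eq,
        mul_one] at hi
    · intro l _ hl
      rw [diagonal_mul_submatrix_apply, Matrix.one_apply_ne, mul_zero, mul_zero]
      rintro h'
      exact hl (by rw [← h', Equiv.symm_apply_apply])
    · simp
  have hπ : σ.trans π.symm = 1 := by
    refine Fin.perm_eq_one_of_apply_le _ fun i => le_of_not_gt fun hlt => hu' i ?_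
    rw [← entry i, hL.1 i (π.symm (σ i)) hlt, zero_mul]
  have hπσ : π = σ :=
    Equiv.ext fun i => (Equiv.symm_apply_eq π).1 (DFunLike.congr_fun hπ i) |>.symm
  refine ⟨hπσ, funext fun i => ?_⟩
  have := entry i
  rwa [← hπσ, Equiv.symm_apply_apply, hL.2, one_mul] at this

end UnipotentMatrices

section HomogeneousUnits

variable {Γ E : Type*} [AddCommGroup Γ] [DecidableEq Γ] [Ring E] (𝒜 : Γ → AddSubgroup E)
  [GradedRing 𝒜]

theorem inv_mem_of_mem_graded {γ : Γ} {u : Eˣ} (hu : (u : E) ∈ 𝒜 γ) :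
    ((u⁻¹ : Eˣ) : E) ∈ 𝒜 (-γ) := by
  have h := DirectSum.coe_decompose_mul_add_of_left_mem 𝒜 (j := -γ) (b := ((u⁻¹ : Eˣ) : E)) hu
  rw [u.mul_inv, add_neg_cancel,
    DirectSum.decompose_of_mem_same 𝒜 (SetLike.GradedOne.one_mem (A := 𝒜))] at h
  rw [Units.inv_eq_of_mul_eq_one_right h.symm]
  exact SetLike.coe_mem _

/-- The group of homogeneous units of a graded ring. -/
def homogeneousUnits : Subgroup Eˣ where
  carrier := {u | ∃ γ, (u : E) ∈ 𝒜 γ}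
  mul_mem' := fun ⟨γ, h⟩ ⟨γ', h'⟩ => ⟨γ + γ', SetLike.GradedMul.mul_mem h h'⟩
  one_mem' := ⟨0, SetLike.GradedOne.one_mem⟩
  inv_mem' := fun ⟨γ, h⟩ => ⟨-γ, inv_mem_of_mem_graded 𝒜 h⟩

theorem neg_one_mem_homogeneousUnits : (-1 : Eˣ) ∈ homogeneousUnits 𝒜 :=
  ⟨0, by
    rw [Units.val_neg, Units.val_one]
    exact neg_mem SetLike.GradedOne.one_mem⟩

/-- The units `±1` of `ℤ` as homogeneous units. -/
def signUnit : ℤˣ →* homogeneousUnits 𝒜 :=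
  (Units.map (Int.castRingHom E : ℤ →* E)).codRestrict (homogeneousUnits 𝒜) fun s => by
    rcases Int.units_eq_one_or s with rfl | rfl
    · rw [map_one]
      exact one_mem _
    · convert neg_one_mem_homogeneousUnits 𝒜
      ext
      simp

theorem coe_signUnit (s : ℤˣ) : ((signUnit 𝒜 s : Eˣ) : E) = ((s : ℤ) : E) := rfl

/-- The sign as an element of the abelianized group of homogeneous units. -/
def abSign : ℤˣ →* Abelianization (homogeneousUnits 𝒜) := Abelianization.of.comp (signUnit 𝒜)

/-- The value of the determinant on a Bruhat normal form with diagonal part `u` and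
permutation `π`. -/
def bruhatValue {n : ℕ} (π : Equiv.Perm (Fin n)) (u : Fin n → homogeneousUnits 𝒜) :
    Abelianization (homogeneousUnits 𝒜) :=
  abSign 𝒜 (Equiv.Perm.sign π) * ∏ i, Abelianization.of (u i)

variable {𝒜}

theorem exists_homogeneousUnit {γ : Γ} {x : E} (hx : x ∈ 𝒜 γ) (h : IsUnit x) :
    ∃ u : homogeneousUnits 𝒜, ((u : Eˣ) : E) = x := by
  obtain ⟨u, rfl⟩ := h
  exact ⟨⟨u, γ, hx⟩, rfl⟩

end HomogeneousUnits

theorem mem_graded_of_eq {Γ E : Type*} [Ring E] {𝒜 : Γ → AddSubgroup E} {x : E}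
    {γ γ' : Γ} (h : x ∈ 𝒜 γ) (e : γ = γ') : x ∈ 𝒜 γ' := e ▸ h

section HomogeneousMatrices

variable {Γ E : Type*} [AddCommGroup Γ] [Ring E] {𝒜 : Γ → AddSubgroup E} {n : ℕ}

/-- Matrices that are homogeneous with respect to row degrees `a` and column degrees `b`. -/
def HomogeneousMatrix (𝒜 : Γ → AddSubgroup E) (a b : Fin n → Γ)
    (M : Matrix (Fin n) (Fin n) E) : Prop :=
  ∀ i j, M i j ∈ 𝒜 (a i - b j)

namespace HomogeneousMatrix

variable {a b c : Fin n → Γ} {M N : Matrix (Fin n) (Fin n) E}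

theorem add (hM : HomogeneousMatrix 𝒜 a b M) (hN : HomogeneousMatrix 𝒜 a b N) :
    HomogeneousMatrix 𝒜 a b (M + N) := fun i j => add_mem (hM i j) (hN i j)

theorem sub (hM : HomogeneousMatrix 𝒜 a b M) (hN : HomogeneousMatrix 𝒜 a b N) :
    HomogeneousMatrix 𝒜 a b (M - N) := fun i j => sub_mem (hM i j) (hN i j)

theorem submatrix (hM : HomogeneousMatrix 𝒜 a b M) (f g : Fin n → Fin n) :
    HomogeneousMatrix 𝒜 (a ∘ f) (b ∘ g) (M.submatrix f g) := fun i j => hM (f i) (g j)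

theorem single {p q : Fin n} {x : E} (hx : x ∈ 𝒜 (a p - b q)) :
    HomogeneousMatrix 𝒜 a b (Matrix.single p q x) := by
  intro i j
  by_cases h : p = i ∧ q = j
  · obtain ⟨rfl, rfl⟩ := h
    rwa [Matrix.single_apply_same]
  · rw [Matrix.single_apply_of_ne _ _ _ _ _ h]
    exact zero_mem _

theorem diagonal {d : Fin n → E} (hd : ∀ i, d i ∈ 𝒜 (a i - b i)) :
    HomogeneousMatrix 𝒜 a b (Matrix.diagonal d) := by
  intro i j
  by_cases h : i = j
  · subst h
    rw [Matrix.diagonal_apply_eq]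
    exact hd i
  · rw [Matrix.diagonal_apply_ne _ h]
    exact zero_mem _

variable [DecidableEq Γ] [GradedRing 𝒜]

theorem mul (hM : HomogeneousMatrix 𝒜 a b M) (hN : HomogeneousMatrix 𝒜 b c N) :
    HomogeneousMatrix 𝒜 a c (M * N) := by
  intro i j
  rw [Matrix.mul_apply]
  exact sum_mem fun l _ =>
    mem_graded_of_eq (SetLike.GradedMul.mul_mem (hM i l) (hN l j)) (by abel)

theorem one : HomogeneousMatrix 𝒜 a a 1 :=
  Matrix.diagonal_one (α := E) (n := Fin n) ▸ diagonal fun i =>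
    mem_graded_of_eq SetLike.GradedOne.one_mem (sub_self (a i)).symm

theorem pow (hM : HomogeneousMatrix 𝒜 a a M) (k : ℕ) : HomogeneousMatrix 𝒜 a a (M ^ k) := by
  induction k with
  | zero => exact one
  | succ k ih => exact pow_succ M k ▸ ih.mul hM

theorem exists_inverse_of_unipotentLower (hM : HomogeneousMatrix 𝒜 a a M)
    (h : UnipotentLower M) :
    ∃ S, UnipotentLower S ∧ HomogeneousMatrix 𝒜 a a S ∧ M * S = 1 ∧ S * M = 1 := by
  obtain ⟨S, hS, h₁, h₂, rfl⟩ := h.exists_inverse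
  refine ⟨_, hS, fun i j => ?_, h₁, h₂⟩
  rw [Matrix.sum_apply]
  exact sum_mem fun k _ => (one.sub hM).pow k i j

theorem exists_inverse_of_unipotentUpper (hM : HomogeneousMatrix 𝒜 a a M)
    (h : UnipotentUpper M) :
    ∃ S, UnipotentUpper S ∧ HomogeneousMatrix 𝒜 a a S ∧ M * S = 1 ∧ S * M = 1 := by
  obtain ⟨S, hS, hS', h₁, h₂⟩ :=
    (hM.submatrix Fin.revPerm Fin.revPerm).exists_inverse_of_unipotentLower h.submatrix_rev
  have e := submatrix_revPerm_submatrix_revPerm M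
  refine ⟨_, hS.submatrix_rev, ?_, ?_, ?_⟩
  · have := hS'.submatrix Fin.revPerm Fin.revPerm
    rwa [Function.comp_assoc, ← Equiv.coe_trans, show Fin.revPerm.trans Fin.revPerm = Equiv.refl
      (Fin n) from Equiv.ext fun i => by simp] at this
  · conv_lhs => rw [← e]
    rw [Matrix.submatrix_mul_equiv, h₁, Matrix.submatrix_one_equiv]
  · conv_lhs => rw [← e]
    rw [Matrix.submatrix_mul_equiv, h₂, Matrix.submatrix_one_equiv]

end HomogeneousMatrix

end HomogeneousMatrices

section Determinant

variable {Γ E : Type*} [AddCommGroup Γ] [DecidableEq Γ] [Ring E] {𝒜 : Γ → AddSubgroup E}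
  [GradedRing 𝒜] {n : ℕ}

/-- `X` has a Bruhat decomposition, homogeneous on the left with respect to the row degrees `a`,
on which the determinant takes the value `x`. -/
def HasBruhatDet (𝒜 : Γ → AddSubgroup E) [GradedRing 𝒜] (a : Fin n → Γ)
    (X : Matrix (Fin n) (Fin n) E) (x : Abelianization (homogeneousUnits 𝒜)) : Prop :=
  ∃ (T : Matrix (Fin n) (Fin n) E) (u : Fin n → homogeneousUnits 𝒜) (π : Equiv.Perm (Fin n))
    (V : Matrix (Fin n) (Fin n) E),
    UnipotentLower T ∧ HomogeneousMatrix 𝒜 a a T ∧ UnipotentUpper V ∧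
      X = T * (Matrix.diagonal (fun i => ((u i : Eˣ) : E)) * V.submatrix π id) ∧
      x = bruhatValue 𝒜 π u

theorem hasBruhatDet_diagonal_mul_submatrix (a : Fin n → Γ) (u : Fin n → homogeneousUnits 𝒜)
    (π : Equiv.Perm (Fin n)) {V : Matrix (Fin n) (Fin n) E} (hV : UnipotentUpper V) :
    HasBruhatDet 𝒜 a (Matrix.diagonal (fun i => ((u i : Eˣ) : E)) * V.submatrix π id)
      (bruhatValue 𝒜 π u) :=
  ⟨1, u, π, V, .one, .one, hV, (one_mul _).symm, rfl⟩

namespace HasBruhatDet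

variable {a : Fin n → Γ} {X : Matrix (Fin n) (Fin n) E}
  {x : Abelianization (homogeneousUnits 𝒜)}

theorem lower_mul (h : HasBruhatDet 𝒜 a X x) {S : Matrix (Fin n) (Fin n) E}
    (hS : UnipotentLower S) (hS' : HomogeneousMatrix 𝒜 a a S) : HasBruhatDet 𝒜 a (S * X) x := by
  obtain ⟨T, u, π, V, hT, hT', hV, rfl, rfl⟩ := h
  exact ⟨S * T, u, π, V, hS.mul hT, hS'.mul hT', hV, (mul_assoc _ _ _).symm, rfl⟩

theorem diagonal_mul (h : HasBruhatDet 𝒜 a X x) {a' : Fin n → Γ}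
    (d : Fin n → homogeneousUnits 𝒜) (hd : ∀ i, ((d i : Eˣ) : E) ∈ 𝒜 (a' i - a i)) :
    HasBruhatDet 𝒜 a' (Matrix.diagonal (fun i => ((d i : Eˣ) : E)) * X)
      ((∏ i, Abelianization.of (d i)) * x) := by
  obtain ⟨T, u, π, V, hT, hT', hV, rfl, rfl⟩ := h
  refine ⟨Matrix.diagonal (fun i => ((d i : Eˣ) : E)) * T *
    Matrix.diagonal (fun i => (((d i : Eˣ)⁻¹ : Eˣ) : E)), d * u, π, V, ⟨fun i j hij => ?_,
    fun i => ?_⟩, ?_, hV, ?_, ?_⟩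
  · rw [Matrix.mul_diagonal, Matrix.diagonal_mul, hT.1 i j hij, mul_zero, zero_mul]
  · rw [Matrix.mul_diagonal, Matrix.diagonal_mul, hT.2, mul_one, Units.mul_inv]
  · exact ((HomogeneousMatrix.diagonal hd).mul hT').mul (HomogeneousMatrix.diagonal fun i =>
      mem_graded_of_eq (inv_mem_of_mem_graded 𝒜 (hd i)) (neg_sub _ _))
  · have e : Matrix.diagonal (fun i => ((((d * u) i : homogeneousUnits 𝒜) : Eˣ) : E)) =
        Matrix.diagonal (fun i => ((d i : Eˣ) : E)) *
          Matrix.diagonal (fun i => ((u i : Eˣ) : E)) := by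
      rw [Matrix.diagonal_mul_diagonal]
      rfl
    have e' : Matrix.diagonal (fun i => (((d i : Eˣ)⁻¹ : Eˣ) : E)) *
        Matrix.diagonal (fun i => ((d i : Eˣ) : E)) = 1 := by
      rw [Matrix.diagonal_mul_diagonal]
      simp
    rw [e]
    simp only [Matrix.mul_assoc]
    rw [← Matrix.mul_assoc _ (Matrix.diagonal (fun i => ((d i : Eˣ) : E))), e', one_mul]
  · simp only [bruhatValue, Pi.mul_apply, map_mul, Finset.prod_mul_distrib]
    exact mul_left_comm _ _ _

end HasBruhatDet

theorem bruhatValue_swap {p q : Fin n} (hpq : p ≠ q) (π : Equiv.Perm (Fin n))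
    (u : Fin n → homogeneousUnits 𝒜) :
    bruhatValue 𝒜 (π * Equiv.swap p q) (u ∘ Equiv.swap p q) =
      abSign 𝒜 (-1) * bruhatValue 𝒜 π u := by
  simp only [bruhatValue, Function.comp_apply]
  rw [Equiv.prod_comp (Equiv.swap p q) fun i => Abelianization.of (u i), map_mul,
    Equiv.Perm.sign_swap hpq, map_mul, mul_comm (abSign 𝒜 _) (abSign 𝒜 (-1)), mul_assoc]

/-- In the rows `p` and `q`, the product of an interchange and a row operation `c` is lower
triangular times diagonal times upper triangular. -/
theorem swap_rows_eq_of_ne_zero {p q : Fin n} (hpq : p ≠ q) (c : Eˣ)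
    (Y : Matrix (Fin n) (Fin n) E) :
    ((1 + Matrix.single q p (c : E)) * Y).submatrix (Equiv.swap p q) id =
      (1 + Matrix.single q p ((c⁻¹ : Eˣ) : E)) *
        (Matrix.diagonal (fun i => ((if i = p then c else if i = q then -c⁻¹ else 1 : Eˣ) : E)) *
          ((1 + Matrix.single p q ((c⁻¹ : Eˣ) : E)) * Y)) := by
  ext i j
  rw [Matrix.submatrix_apply, id, one_add_single_mul_apply, one_add_single_mul_apply,
    Matrix.diagonal_mul, Matrix.diagonal_mul, one_add_single_mul_apply, one_add_single_mul_apply]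
  by_cases hp : i = p
  · subst hp
    simp [hpq, mul_add, add_comm]
  · by_cases hq : i = q
    · subst hq
      simp [hpq, hpq.symm, mul_add]
    · simp [hp, hq, Equiv.swap_apply_of_ne_of_ne hp hq]

theorem swap_lt_swap_of_lt {p q i j : Fin n} (hpq : (p : ℕ) + 1 = q) (hij : i < j)
    (hne : ¬ (i = p ∧ j = q)) : Equiv.swap p q i < Equiv.swap p q j := by
  simp only [Equiv.swap_apply_def, Fin.ext_iff, Fin.lt_def] at *
  split_ifs <;> omega

/-- Splitting off the entry at `(q, p)`, for consecutive `p` and `q`. -/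
theorem exists_eq_mul_one_add_single {a : Fin n → Γ} {p q : Fin n} (hpq : (p : ℕ) + 1 = q)
    {T : Matrix (Fin n) (Fin n) E} (hT : UnipotentLower T) (hT' : HomogeneousMatrix 𝒜 a a T) :
    ∃ S : Matrix (Fin n) (Fin n) E, T = S * (1 + Matrix.single q p (T q p)) ∧
      UnipotentLower (S.submatrix (Equiv.swap p q) (Equiv.swap p q)) ∧
      HomogeneousMatrix 𝒜 a a S := by
  have hlt : p < q := by rw [Fin.lt_def]; omega
  have hS : UnipotentLower (T * (1 + Matrix.single q p (-T q p))) :=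
    hT.mul (unipotentLower_one_add_single hlt)
  refine ⟨T * (1 + Matrix.single q p (-T q p)), ?_, ⟨fun i j hij => ?_, fun i => hS.2 _⟩,
    hT'.mul (HomogeneousMatrix.one.add (.single (neg_mem (hT' q p))))⟩
  · rw [mul_assoc]
    simp only [add_mul, mul_add, one_mul, mul_one, Matrix.single_mul_single_of_ne _ _ _ _ hlt.ne,
      add_zero]
    rw [add_assoc, ← mul_add, ← Matrix.single_add, neg_add_cancel, Matrix.single_zero, mul_zero,
      add_zero]
  · by_cases h : i = p ∧ j = q
    · obtain ⟨rfl, rfl⟩ := h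
      rw [Matrix.submatrix_apply, Equiv.swap_apply_left, Equiv.swap_apply_right, mul_add, mul_one,
        Matrix.add_apply, Matrix.mul_single_apply_same, hT.2, one_mul, add_neg_cancel]
    · exact hS.1 _ _ (swap_lt_swap_of_lt hpq hij h)

namespace HasBruhatDet

variable {a : Fin n → Γ} {X : Matrix (Fin n) (Fin n) E}
  {x : Abelianization (homogeneousUnits 𝒜)}

theorem submatrix_swap (hdiv : ∀ (γ : Γ) (x : E), x ∈ 𝒜 γ → x ≠ 0 → IsUnit x)
    (h : HasBruhatDet 𝒜 a X x) {p q : Fin n} (hpq : (p : ℕ) + 1 = q) :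
    HasBruhatDet 𝒜 (a ∘ Equiv.swap p q) (X.submatrix (Equiv.swap p q) id)
      (abSign 𝒜 (-1) * x) := by
  obtain ⟨T, u, π, V, hT, hT', hV, rfl, rfl⟩ := h
  have hlt : p < q := by rw [Fin.lt_def]; omega
  obtain ⟨S, hTS, hS, hS'⟩ := exists_eq_mul_one_add_single hpq hT hT'
  have hc' := hT' q p
  generalize T q p = c at hTS hc'
  rw [hTS, mul_assoc, ← Matrix.submatrix_mul_equiv _ _ _ (Equiv.swap p q)]
  refine lower_mul ?_ hS (hS'.submatrix _ _)
  by_cases hc : c = 0 ∨ π q < π p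
  · obtain ⟨W, hW, e⟩ := exists_one_add_single_mul_eq (fun i => (u i : Eˣ)) π hV hc
    rw [e, ← bruhatValue_swap hlt.ne]
    convert hasBruhatDet_diagonal_mul_submatrix (a ∘ Equiv.swap p q) (u ∘ Equiv.swap p q)
      (π * Equiv.swap p q) hW using 1
    ext i j
    rw [Matrix.submatrix_apply, diagonal_mul_submatrix_apply, diagonal_mul_submatrix_apply]
    rfl
  · obtain ⟨hc₀, hπ⟩ := not_or.1 hc
    obtain ⟨c, rfl⟩ := exists_homogeneousUnit hc' (hdiv _ _ hc' hc₀)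
    have hπ' : π p < π q := lt_of_le_of_ne (not_lt.1 hπ) (π.injective.ne hlt.ne)
    obtain ⟨W, hW, e⟩ := exists_one_add_single_mul_eq (c := (((c : Eˣ)⁻¹ : Eˣ) : E))
      (fun i => (u i : Eˣ)) π hV (Or.inr hπ')
    have hi : (((c : Eˣ)⁻¹ : Eˣ) : E) ∈ 𝒜 (a p - a q) :=
      mem_graded_of_eq (inv_mem_of_mem_graded 𝒜 hc') (neg_sub _ _)
    rw [swap_rows_eq_of_ne_zero hlt.ne, e]
    refine lower_mul ?_ (unipotentLower_one_add_single hlt) (HomogeneousMatrix.one.add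
      (.single (by simpa using hi)))
    have key := (hasBruhatDet_diagonal_mul_submatrix a u π hW).diagonal_mul
      (a' := a ∘ Equiv.swap p q)
      (fun i => if i = p then c else if i = q then signUnit 𝒜 (-1) * c⁻¹ else 1) (by
        intro i
        by_cases hp : i = p
        · subst hp
          simpa using hc'
        · by_cases hq : i = q
          · subst hq
            simpa [hp, coe_signUnit] using hi
          · simpa [hp, hq, Equiv.swap_apply_of_ne_of_ne hp hq] using
              SetLike.GradedOne.one_mem (A := 𝒜))
    convert key using 3
    · ext i
      split_ifs <;> simp [coe_signUnit]
    · rw [← Finset.mul_prod_erase _ _ (Finset.mem_univ p), ← Finset.mul_prod_erase _ _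
        (Finset.mem_erase.2 ⟨hlt.ne', Finset.mem_univ q⟩), Finset.prod_eq_one]
      · simp [hlt.ne', abSign]
      · intro i hi
        simp only [Finset.mem_erase] at hi
        simp [hi.1, hi.2.1]

theorem submatrix_perm (hdiv : ∀ (γ : Γ) (x : E), x ∈ 𝒜 γ → x ≠ 0 → IsUnit x)
    (h : HasBruhatDet 𝒜 a X x) (σ : Equiv.Perm (Fin n)) :
    HasBruhatDet 𝒜 (a ∘ σ) (X.submatrix σ id) (abSign 𝒜 (Equiv.Perm.sign σ) * x) := by
  cases n with
  | zero => simpa [Subsingleton.elim σ 1] using h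
  | succ n =>
    have hσ : σ ∈ Submonoid.closure
        (Set.range fun i : Fin n => Equiv.swap i.castSucc i.succ) := by
      rw [Equiv.Perm.mclosure_swap_castSucc_succ]
      trivial
    induction hσ using Submonoid.closure_induction generalizing a X x with
    | mem σ hσ =>
      obtain ⟨i, rfl⟩ := hσ
      rw [Equiv.Perm.sign_swap i.castSucc_lt_succ.ne]
      exact h.submatrix_swap hdiv (by simp)
    | one => simpa using h
    | mul σ τ _ _ hσ hτ =>
      have := hτ (hσ h)
      rwa [Matrix.submatrix_submatrix, ← mul_assoc, mul_comm (abSign 𝒜 _), ← map_mul,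
        ← map_mul] at this

theorem upper_mul (hdiv : ∀ (γ : Γ) (x : E), x ∈ 𝒜 γ → x ≠ 0 → IsUnit x)
    (h : HasBruhatDet 𝒜 a X x) {V : Matrix (Fin n) (Fin n) E} (hV : UnipotentUpper V)
    (hV' : HomogeneousMatrix 𝒜 a a V) : HasBruhatDet 𝒜 a (V * X) x := by
  have key := ((h.submatrix_perm hdiv Fin.revPerm).lower_mul hV.submatrix_rev
    (hV'.submatrix _ _)).submatrix_perm hdiv Fin.revPerm
  rw [Matrix.submatrix_mul_equiv, Matrix.submatrix_submatrix, ← mul_assoc, ← map_mul,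
    Int.units_mul_self, map_one, one_mul, Function.comp_assoc, ← Equiv.coe_trans,
    show Fin.revPerm.trans Fin.revPerm = Equiv.refl (Fin n) from Equiv.ext fun i => by simp]
    at key
  exact key

theorem mul (hdiv : ∀ (γ : Γ) (x : E), x ∈ 𝒜 γ → x ≠ 0 → IsUnit x) {b : Fin n → Γ}
    (h : HasBruhatDet 𝒜 b X x) {T V : Matrix (Fin n) (Fin n) E}
    {u : Fin n → homogeneousUnits 𝒜} {π : Equiv.Perm (Fin n)} (hT : UnipotentLower T)
    (hT' : HomogeneousMatrix 𝒜 a a T) (hV : UnipotentUpper V) (hV' : HomogeneousMatrix 𝒜 b b V)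
    (hu : ∀ i, ((u i : Eˣ) : E) ∈ 𝒜 (a i - b (π i))) :
    HasBruhatDet 𝒜 a (T * (Matrix.diagonal (fun i => ((u i : Eˣ) : E)) * V.submatrix π id) * X)
      (bruhatValue 𝒜 π u * x) := by
  have key := (((h.upper_mul hdiv hV hV').submatrix_perm hdiv π).diagonal_mul u hu).lower_mul
    hT hT'
  convert key using 1
  · rw [mul_assoc, mul_assoc]
    rfl
  · rw [bruhatValue, mul_comm (abSign 𝒜 _), mul_assoc]

end HasBruhatDet

end Determinant

section Existence

variable {Γ E : Type*} [AddCommGroup Γ] [DecidableEq Γ] [Ring E] {𝒜 : Γ → AddSubgroup E}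
  [GradedRing 𝒜] {n : ℕ}

/-- `B i j` is nonzero and is the only nonzero entry in its row and in its column. -/
def IsIsolatedEntry (B : Matrix (Fin n) (Fin n) E) (i j : Fin n) : Prop :=
  B i j ≠ 0 ∧ (∀ m, m ≠ j → B i m = 0) ∧ ∀ m, m ≠ i → B m j = 0

/-- One step of the elimination, clearing the row `k` and the column of its leading entry. -/
theorem exists_isolate_row [Nontrivial E]
    (hdiv : ∀ (γ : Γ) (x : E), x ∈ 𝒜 γ → x ≠ 0 → IsUnit x) {a b : Fin n → Γ}
    {B : Matrix (Fin n) (Fin n) E} (hB : HomogeneousMatrix 𝒜 a b B) (hu : IsUnit B) (k : Fin n)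
    (hk : ∀ i < k, ∃ j, IsIsolatedEntry B i j) :
    ∃ T V : Matrix (Fin n) (Fin n) E, UnipotentLower T ∧ HomogeneousMatrix 𝒜 a a T ∧
      UnipotentUpper V ∧ HomogeneousMatrix 𝒜 b b V ∧
      ∀ i ≤ k, ∃ j, IsIsolatedEntry (T * B * V) i j := by
  have hne : {j | B k j ≠ 0}.Nonempty := by
    by_contra hempty
    obtain ⟨C, hC⟩ := hu.exists_right_inv
    have h := congrFun (congrFun hC k) k
    rw [Matrix.mul_apply, Matrix.one_apply_eq, Finset.sum_eq_zero] at h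
    · exact zero_ne_one h
    · intro l _
      have : B k l = 0 := by
        by_contra hl
        exact hempty ⟨l, hl⟩
      rw [this, zero_mul]
  obtain ⟨j, hj, hmin⟩ := wellFounded_lt.has_min _ hne
  have hleft : ∀ m < j, B k m = 0 := fun m hm => by
    by_contra h
    exact hmin m h hm
  obtain ⟨v, hv⟩ := hdiv _ _ (hB k j) hj
  have hp : ((v⁻¹ : Eˣ) : E) ∈ 𝒜 (-(a k - b j)) := inv_mem_of_mem_graded 𝒜 (hv ▸ hB k j)
  have hp₁ : ((v⁻¹ : Eˣ) : E) * B k j = 1 := by rw [← hv, Units.inv_mul]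
  have hp₂ : B k j * ((v⁻¹ : Eˣ) : E) = 1 := by rw [← hv, Units.mul_inv]
  generalize ((v⁻¹ : Eˣ) : E) = p at hp hp₁ hp₂
  let g : Fin n → E := fun i => if k < i then B i j * p else 0
  let h : Fin n → E := fun m => if j < m then p * B k m else 0
  have hg : ∀ i, g i ∈ 𝒜 (a i - a k) := fun i => by
    simp only [g]
    split_ifs
    · exact mem_graded_of_eq (SetLike.GradedMul.mul_mem (hB i j) hp) (by abel)
    · exact zero_mem _
  have hh : ∀ m, h m ∈ 𝒜 (b j - b m) := fun m => by
    simp only [h]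
    split_ifs
    · exact mem_graded_of_eq (SetLike.GradedMul.mul_mem hp (hB k m)) (by abel)
    · exact zero_mem _
  let G : Matrix (Fin n) (Fin n) E := Matrix.of fun i m => if m = k then g i else 0
  let H : Matrix (Fin n) (Fin n) E := Matrix.of fun i m => if i = j then h m else 0
  have entry : ∀ i m, ((1 - G) * B * (1 - H)) i m =
      (B i m - g i * B k m) - (B i j - g i * B k j) * h m := by
    intro i m
    have e₁ : ∀ m, ((1 - G) * B) i m = B i m - g i * B k m := fun m => by
      rw [sub_mul, one_mul, Matrix.sub_apply, Matrix.mul_apply]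
      simp [G]
    rw [mul_sub, mul_one, Matrix.sub_apply, e₁, Matrix.mul_apply (M := (1 - G) * B) (N := H)]
    simp only [e₁]
    simp [H]
  have hgk : g k = 0 := if_neg (lt_irrefl k)
  have hgi : ∀ i < k, g i = 0 := fun i hi => if_neg hi.not_gt
  have hhj : h j = 0 := if_neg (lt_irrefl j)
  have hcol : ∀ i, i < k → B i j = 0 := fun i hi => by
    obtain ⟨l, -, hrow, hcol⟩ := hk i hi
    refine hrow j ?_
    rintro rfl
    exact hj (hcol k hi.ne')
  have hcol' : ∀ i, i ≠ k → B i j - g i * B k j = 0 := fun i hi => by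
    rcases lt_or_gt_of_ne hi with hi | hi
    · rw [hcol i hi, hgi i hi, zero_mul, sub_zero]
    · simp only [g, if_pos hi, mul_assoc, hp₁, mul_one, sub_self]
  refine ⟨1 - G, 1 - H, ⟨fun i m him => ?_, fun i => ?_⟩, HomogeneousMatrix.one.sub fun i m => ?_,
    ⟨fun i m him => ?_, fun i => ?_⟩, HomogeneousMatrix.one.sub fun i m => ?_, fun i hi => ?_⟩
  · by_cases hm : m = k
    · subst hm
      simp [G, Matrix.one_apply_ne him.ne, hgi i him]
    · simp [G, Matrix.one_apply_ne him.ne, hm]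
  · by_cases hm : i = k
    · subst hm
      simp [G, hgk]
    · simp [G, hm]
  · by_cases hm : m = k
    · subst hm
      simpa [G] using hg i
    · simp [G, hm]
  · by_cases hm : i = j
    · subst hm
      simp [H, Matrix.one_apply_ne him.ne', h, him.not_gt]
    · simp [H, Matrix.one_apply_ne him.ne', hm]
  · by_cases hm : i = j
    · subst hm
      simp [H, hhj]
    · simp [H, hm]
  · by_cases hm : i = j
    · subst hm
      simpa [H] using hh m
    · simp [H, hm]
  · rcases hi.lt_or_eq with hi | rfl
    · obtain ⟨l, hl₀, hl₁, hl₂⟩ := hk i hi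
      refine ⟨l, ?_, fun m hm => ?_, fun m hm => ?_⟩
      · rwa [entry, hgi i hi, hcol i hi, zero_mul, zero_mul, sub_zero, sub_zero, zero_mul,
          sub_zero]
      · rw [entry, hgi i hi, hcol i hi, hl₁ m hm, zero_mul, zero_mul, sub_zero, zero_mul, sub_zero]
      · have hhl : h l = 0 := by
          simp only [h, hl₂ k hi.ne', mul_zero, ite_self]
        rw [entry, hl₂ m hm, hl₂ k hi.ne', hhl, mul_zero, mul_zero, sub_zero, sub_zero]
    · refine ⟨j, ?_, fun m hm => ?_, fun m hm => ?_⟩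
      · rw [entry, hhj, hgk, mul_zero, zero_mul, sub_zero, sub_zero]
        exact hj
      · rw [entry, hgk, zero_mul, zero_mul, sub_zero, sub_zero]
        rcases lt_or_gt_of_ne hm with hm | hm
        · rw [hleft m hm, show h m = 0 from if_neg hm.not_gt, mul_zero, sub_zero]
        · rw [show h m = p * B i m from if_pos hm, ← mul_assoc, hp₂, one_mul, sub_self]
      · rw [entry, hcol' m hm, hhj, mul_zero, sub_zero]

theorem UnipotentLower.isUnit {R : Type*} [Ring R] {T : Matrix (Fin n) (Fin n) R}
    (h : UnipotentLower T) : IsUnit T := by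
  obtain ⟨S, -, h₁, h₂, -⟩ := h.exists_inverse
  exact ⟨⟨T, S, h₁, h₂⟩, rfl⟩

theorem UnipotentUpper.isUnit {R : Type*} [Ring R] {V : Matrix (Fin n) (Fin n) R}
    (h : UnipotentUpper V) : IsUnit V := by
  obtain ⟨S, -, h₁, h₂⟩ := h.exists_inverse
  exact ⟨⟨V, S, h₁, h₂⟩, rfl⟩

theorem exists_isolate_rows [Nontrivial E]
    (hdiv : ∀ (γ : Γ) (x : E), x ∈ 𝒜 γ → x ≠ 0 → IsUnit x) {a b : Fin n → Γ}
    {A : Matrix (Fin n) (Fin n) E} (hA : HomogeneousMatrix 𝒜 a b A) (hu : IsUnit A) (k : ℕ)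
    (hk : k ≤ n) :
    ∃ T V : Matrix (Fin n) (Fin n) E, UnipotentLower T ∧ HomogeneousMatrix 𝒜 a a T ∧
      UnipotentUpper V ∧ HomogeneousMatrix 𝒜 b b V ∧
      ∀ i : Fin n, (i : ℕ) < k → ∃ j, IsIsolatedEntry (T * A * V) i j := by
  induction k with
  | zero => exact ⟨1, 1, .one, .one, .one, .one, fun i hi => absurd hi (Nat.not_lt_zero _)⟩
  | succ k ih =>
    obtain ⟨T, V, hT, hT', hV, hV', h⟩ := ih (Nat.le_of_succ_le hk)
    obtain ⟨S, W, hS, hS', hW, hW', h'⟩ := exists_isolate_row hdiv ((hT'.mul hA).mul hV')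
      ((hT.isUnit.mul hu).mul hV.isUnit) ⟨k, hk⟩ fun i hi => h i hi
    refine ⟨S * T, V * W, hS.mul hT, hS'.mul hT', hV.mul hW, hV'.mul hW', fun i hi => ?_⟩
    have := h' i (Nat.le_of_lt_succ hi)
    simpa only [mul_assoc] using this

/-- Existence of a homogeneous Bruhat decomposition. -/
theorem exists_bruhat [Nontrivial E]
    (hdiv : ∀ (γ : Γ) (x : E), x ∈ 𝒜 γ → x ≠ 0 → IsUnit x) {a b : Fin n → Γ}
    {A : Matrix (Fin n) (Fin n) E} (hA : HomogeneousMatrix 𝒜 a b A) (hu : IsUnit A) :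
    ∃ (T : Matrix (Fin n) (Fin n) E) (u : Fin n → homogeneousUnits 𝒜) (π : Equiv.Perm (Fin n))
      (V : Matrix (Fin n) (Fin n) E), UnipotentLower T ∧ HomogeneousMatrix 𝒜 a a T ∧
      UnipotentUpper V ∧ HomogeneousMatrix 𝒜 b b V ∧
      (∀ i, ((u i : Eˣ) : E) ∈ 𝒜 (a i - b (π i))) ∧
      A = T * (Matrix.diagonal (fun i => ((u i : Eˣ) : E)) * V.submatrix π id) := by
  obtain ⟨T, V, hT, hT', hV, hV', h⟩ := exists_isolate_rows hdiv hA hu n le_rfl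
  have hB := (hT'.mul hA).mul hV'
  choose j hj using fun i => h i i.2
  have hinj : Function.Injective j := fun i i' hii => by
    by_contra hne
    exact (hj i).1 (hii ▸ (hj i').2.2 i hne)
  choose u hu' using fun i =>
    exists_homogeneousUnit (hB i (j i)) (hdiv _ _ (hB i (j i)) (hj i).1)
  obtain ⟨S, hS, hS', -, hST⟩ := hT'.exists_inverse_of_unipotentLower hT
  obtain ⟨W, hW, hW', hVW, -⟩ := hV'.exists_inverse_of_unipotentUpper hV
  refine ⟨S, u, Equiv.ofBijective j (Finite.injective_iff_bijective.1 hinj), W, hS, hS', hW, hW',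
    fun i => hu' i ▸ hB i (j i), ?_⟩
  have hdiag : T * A * V = Matrix.diagonal (fun i => ((u i : Eˣ) : E)) *
      (1 : Matrix (Fin n) (Fin n) E).submatrix j id := by
    ext i m
    rw [diagonal_mul_submatrix_apply, hu']
    by_cases hm : m = j i
    · rw [hm, Matrix.one_apply_eq, mul_one]
    · rw [Matrix.one_apply_ne (Ne.symm hm), mul_zero, (hj i).2.1 m hm]
  calc A = S * (T * A * V * W) := by
        rw [mul_assoc (T * A), hVW, mul_one, ← mul_assoc, hST, one_mul]
    _ = _ := by
        rw [hdiag, mul_assoc]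
        congr 2
        change ((1 : Matrix (Fin n) (Fin n) E) * W).submatrix j id = _
        rw [one_mul]
        rfl

/-- The value of the determinant is determined by the matrix. -/
theorem HasBruhatDet.unique [Nontrivial E] {a a' : Fin n → Γ} {X : Matrix (Fin n) (Fin n) E}
    {x y : Abelianization (homogeneousUnits 𝒜)} (hx : HasBruhatDet 𝒜 a X x)
    (hy : HasBruhatDet 𝒜 a' X y) : x = y := by
  obtain ⟨T, u, π, V, hT, -, hV, rfl, rfl⟩ := hx
  obtain ⟨T', u', π', V', hT', -, hV', h, rfl⟩ := hy
  obtain ⟨rfl, hu⟩ := bruhat_unique hT hT' hV hV' (fun i => (u' i : Eˣ).ne_zero) h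
  rw [show u = u' from funext fun i => Subtype.ext (Units.ext (congrFun hu i))]

end Existence

/-- homogeneous Dieudonné determinant.  Let `E` be a `Γ`-graded
division ring, `δ̄ ∈ Γⁿ` and `S = Mₙ(E)(δ̄)`.  Let `Eh = E_h*` be the group of
homogeneous units of `E` and `Sh = S_h*` the group of homogeneous units of `S`.  Then
there is a group homomorphism `det_E : S_h* → E_h*/[E_h*, E_h*]` such that whenever
`A ∈ S_h*` has strict Bruhat normal form `A = T * diag(u) * P_π * V`, one has
`det_E A = sgn(π) · u₁ ⋯ uₙ  mod [E_h*, E_h*]`. -/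
theorem homogeneous_dieudonne_det {Γ E : Type*} [AddCommGroup Γ] [DecidableEq Γ]
    [Ring E] [Nontrivial E] (𝒜 : Γ → AddSubgroup E) [GradedRing 𝒜]
    (hdiv : ∀ (γ : Γ) (x : E), x ∈ 𝒜 γ → x ≠ 0 → IsUnit x)
    {n : ℕ} (δ : Fin n → Γ)
    (Eh : Subgroup Eˣ) (hEh : ∀ u : Eˣ, u ∈ Eh ↔ ∃ γ, u.val ∈ 𝒜 γ)
    (Sh : Subgroup (Matrix (Fin n) (Fin n) E)ˣ)
    (hSh : ∀ A : (Matrix (Fin n) (Fin n) E)ˣ,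
      A ∈ Sh ↔ ∃ lam, A.val ∈ MatrixGrade 𝒜 δ lam) :
    ∃ detE : ↥Sh →* Abelianization ↥Eh,
      ∀ (A : ↥Sh) (T : Matrix (Fin n) (Fin n) E) (u : Fin n → E)
        (π : Equiv.Perm (Fin n)) (V : Matrix (Fin n) (Fin n) E),
        UnipotentLower T → (∀ i, IsUnit (u i)) → UnipotentUpper V →
        UnipotentUpper (π.permMatrix E * V * (π⁻¹).permMatrix E) →
        A.val.val = T * Matrix.diagonal u * π.permMatrix E * V →
        ∀ w : ↥Eh,
          w.val.val = ((Equiv.Perm.sign π : ℤ) : E) * (List.ofFn u).prod →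
          detE A = Abelianization.of w := by
  obtain rfl : Eh = homogeneousUnits 𝒜 := Subgroup.ext hEh
  have hhom : ∀ A : ↥Sh, ∃ lam, HomogeneousMatrix 𝒜 (fun i => lam - δ i) (fun i => -δ i)
      A.val.val := fun A => by
    obtain ⟨lam, h⟩ := (hSh A.val).1 A.2
    exact ⟨lam, fun i j => mem_graded_of_eq (h i j) (by rw [sub_neg_eq_add, add_sub_right_comm])⟩
  choose lam hlam using hhom
  choose T u π V hT hT' hV hV' hu hA using fun A : ↥Sh =>
    exists_bruhat hdiv (hlam A) A.val.isUnit
  have hdet : ∀ A : ↥Sh, HasBruhatDet 𝒜 (fun i => lam A - δ i) A.val.val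
      (bruhatValue 𝒜 (π A) (u A)) := fun A =>
    ⟨T A, u A, π A, V A, hT A, hT' A, hV A, hA A, rfl⟩
  refine ⟨MonoidHom.mk' (fun A => bruhatValue 𝒜 (π A) (u A)) fun A B => ?_,
    fun A T' u' π' V' hT₁ hu₁ hV₁ _ hA₁ w hw => ?_⟩
  · obtain ⟨T₂, u₂, π₂, V₂, hT₂, hT₂', hV₂, -, -, hB₂⟩ := exists_bruhat hdiv
      (a := fun i => -δ i) (b := fun i => -δ i - lam B)
      (fun i j => mem_graded_of_eq (hlam B i j) (by
        rw [sub_neg_eq_add]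
        simp only [sub_eq_add_neg, neg_add, neg_neg]
        abel)) B.val.isUnit
    have hB : HasBruhatDet 𝒜 (fun i => -δ i) B.val.val (bruhatValue 𝒜 π₂ u₂) :=
      ⟨T₂, u₂, π₂, V₂, hT₂, hT₂', hV₂, hB₂, rfl⟩
    have hAB := hB.mul hdiv (hT A) (hT' A) (hV A) (hV' A) (hu A)
    rw [← hA A, hB.unique (hdet B)] at hAB
    exact (hdet (A * B)).unique hAB
  · rw [mul_assoc, mul_assoc, PEquiv.toMatrix_toPEquiv_mul] at hA₁
    obtain ⟨hπ, hu₂⟩ := bruhat_unique hT₁ (hT A) hV₁ (hV A)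
      (fun i => (u A i : Eˣ).ne_zero) (hA₁.symm.trans (hA A))
    have hw' : w = signUnit 𝒜 (Equiv.Perm.sign π') * (List.ofFn (u A)).prod := by
      refine Subtype.ext (Units.ext (hw.trans ?_))
      have hprod : (((List.ofFn (u A)).prod : Eˣ) : E) = (List.ofFn u').prod := by
        rw [hu₂, SubmonoidClass.coe_list_prod, ← Units.coeHom_apply, map_list_prod,
          List.map_ofFn, List.map_ofFn]
        rfl
      rw [← hprod]
      rfl
    rw [hw', hπ, map_mul, map_list_prod, List.map_ofFn, List.prod_ofFn]
    rfl
end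

section
/- Let Γ be an abelian group with no nonzero n-torsion, E a Γ-graded division ring with center T = Z(E) such that E is unramified over T (Γ_E = Γ_T), and suppose Mₙ(E₀) ≠ M₂(𝔽₂). Let S = Mₙ(E) with the unshifted grading. Then the kernel of the homogeneous Dieudonné determinant det_E equals the commutator subgroup [GLₙ^h(E), GLₙ^h(E)], so det_E induces an injective group homomorphism GLₙ^h(E)/[GLₙ^h(E),GLₙ^h(E)] ↪ E_h*/[E_h*,E_h*]. -/
set_option maxHeartbeats 1000000

section Elimination

open scoped commutatorElement

variable {ι D : Type*} [Fintype ι] [DecidableEq ι] [Ring D]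

/-- The elementary matrix adding `c i` times row `k` to row `i`, for all `i` at once. -/
def rowAddUnit (k : ι) (c : ι → D) (hc : c k = 0) : (Matrix ι ι D)ˣ where
  val := 1 + Matrix.vecMulVec c (Pi.single k 1)
  inv := 1 - Matrix.vecMulVec c (Pi.single k 1)
  val_inv := by
    simp [Matrix.mul_sub, Matrix.add_mul, Matrix.vecMulVec_mul_vecMulVec, hc]
  inv_val := by
    simp [Matrix.mul_add, Matrix.sub_mul, Matrix.vecMulVec_mul_vecMulVec, hc]

theorem rowAddUnit_mul_apply (k : ι) (c : ι → D) (hc : c k = 0) (A : Matrix ι ι D) (i j : ι) :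
    ((rowAddUnit k c hc).val * A) i j = A i j + c i * A k j := by
  simp [rowAddUnit, Matrix.add_mul, Matrix.vecMulVec_mul, Matrix.vecMulVec_apply]

theorem rowAddUnit_add (k : ι) (c d : ι → D) (hc : c k = 0) (hd : d k = 0) :
    rowAddUnit k (c + d) (by simp [hc, hd]) = rowAddUnit k c hc * rowAddUnit k d hd := by
  ext i j
  rw [Units.val_mul, rowAddUnit_mul_apply]
  simp [rowAddUnit, Matrix.vecMulVec_apply, hd]
  rw [Matrix.one_apply (i := k), Pi.single_apply]
  by_cases h : k = j
  · simp [h, add_assoc, add_comm (d i)]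
  · simp [h, Ne.symm h]

theorem rowAddUnit_zero (k : ι) : rowAddUnit k (0 : ι → D) rfl = 1 := by
  ext i j
  simp [rowAddUnit]

/-- Invertible diagonal matrices. -/
def diagonalUnits : (ι → Dˣ) →* (Matrix ι ι D)ˣ :=
  (Units.map (Matrix.diagonalRingHom ι D).toMonoidHom).comp MulEquiv.piUnits.symm.toMonoidHom

theorem diagonalUnits_val (d : ι → Dˣ) :
    (diagonalUnits d).val = Matrix.diagonal fun i => (d i).val := rfl

theorem rowAddUnit_single_mem_commutator (hdiv : ∀ x : D, x ≠ 0 → IsUnit x)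
    (h2 : Fintype.card ι ≠ 2 ∨ ∃ x : D, x ≠ 0 ∧ x ≠ 1) {i k : ι} (hik : i ≠ k) (a : D) :
    rowAddUnit k (Pi.single i a) (by simp [hik.symm]) ∈ commutator (Matrix ι ι D)ˣ := by
  by_cases hx : ∃ x : D, x ≠ 0 ∧ x ≠ 1
  · obtain ⟨x, hx0, hx1⟩ := hx
    obtain ⟨u, rfl⟩ := hdiv x hx0
    obtain ⟨v, hv⟩ := hdiv (u - 1 : D) (sub_ne_zero.2 hx1)
    have : rowAddUnit k (Pi.single i a) (by simp [hik.symm]) =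
        ⁅diagonalUnits (Pi.mulSingle i u),
          rowAddUnit k (Pi.single i ((v⁻¹ : Dˣ) * a)) (by simp [hik.symm])⁆ := by
      rw [commutatorElement_def, eq_mul_inv_iff_mul_eq, eq_mul_inv_iff_mul_eq]
      ext p q
      rw [mul_assoc, Units.val_mul, rowAddUnit_mul_apply, Units.val_mul, rowAddUnit_mul_apply,
        rowAddUnit_mul_apply, Units.val_mul, diagonalUnits_val, Matrix.diagonal_mul]
      have hu : (u : D) = v + 1 := by simp [hv]
      by_cases hp : p = i
      · subst hp
        by_cases hq : q = k
        · subst hq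
          simp [hik, hik.symm, rowAddUnit, Matrix.vecMulVec_apply, hu, add_mul, add_comm]
        · simp [hik.symm, rowAddUnit, Matrix.vecMulVec_apply, hq, Ne.symm hq,
            Matrix.diagonal_apply, Matrix.one_apply]
      · by_cases hq : q = k
        · subst hq
          simp [hp, rowAddUnit, Matrix.vecMulVec_apply, Matrix.diagonal_apply, Matrix.one_apply]
        · simp [hp, rowAddUnit, Matrix.vecMulVec_apply, Matrix.diagonal_apply, Matrix.one_apply]
    rw [this]
    exact Subgroup.commutator_mem_commutator (Subgroup.mem_top _) (Subgroup.mem_top _)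
  · have hc := h2.resolve_right hx
    obtain ⟨j, hji, hjk⟩ : ∃ j, j ≠ i ∧ j ≠ k := by
      by_contra! h
      apply hc
      rw [← Finset.card_univ, ← Finset.card_pair hik]
      congr 1
      ext j
      simp
      tauto
    have : rowAddUnit k (Pi.single i a) (by simp [hik.symm]) =
        ⁅rowAddUnit j (Pi.single i a) (by simp [hji]),
          rowAddUnit k (Pi.single j 1) (by simp [hjk.symm])⁆ := by
      rw [commutatorElement_def, eq_mul_inv_iff_mul_eq, eq_mul_inv_iff_mul_eq]
      ext p q
      simp only [mul_assoc, Units.val_mul, rowAddUnit_mul_apply]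
      have h1 : ∀ p q : ι, (1 : Matrix ι ι D) p q = (Pi.single p 1 : ι → D) q := fun p q => by
        simp [Matrix.one_apply, Pi.single_apply, eq_comm]
      by_cases hp : p = i
      · subst hp
        simp [hik.symm, hji.symm, hjk.symm, rowAddUnit, Matrix.vecMulVec_apply, mul_add, h1]
        abel
      · simp [hik.symm, hjk.symm, hp, rowAddUnit, Matrix.vecMulVec_apply, h1]
    rw [this]
    exact Subgroup.commutator_mem_commutator (Subgroup.mem_top _) (Subgroup.mem_top _)

theorem rowAddUnit_mem_commutator (hdiv : ∀ x : D, x ≠ 0 → IsUnit x)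
    (h2 : Fintype.card ι ≠ 2 ∨ ∃ x : D, x ≠ 0 ∧ x ≠ 1) (k : ι) (c : ι → D) (hc : c k = 0) :
    rowAddUnit k c hc ∈ commutator (Matrix ι ι D)ˣ := by
  have key : ∀ s : Finset ι, ∀ h : (∑ i ∈ s, Pi.single i (c i) : ι → D) k = 0,
      rowAddUnit k (∑ i ∈ s, Pi.single i (c i)) h ∈ commutator (Matrix ι ι D)ˣ := by
    intro s
    induction s using Finset.induction_on with
    | empty =>
      intro h
      simp only [Finset.sum_empty, rowAddUnit_zero, one_mem]
    | insert i s hi ih =>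
      intro h
      have hi' : (Pi.single i (c i) : ι → D) k = 0 := by
        by_cases hik : k = i
        · subst hik; simp [hc]
        · simp [hik]
      have hs : (∑ i ∈ s, Pi.single i (c i) : ι → D) k = 0 := by
        rw [Finset.sum_insert hi, Pi.add_apply, hi', zero_add] at h
        exact h
      simp only [Finset.sum_insert hi]
      rw [rowAddUnit_add k _ _ hi' hs]
      refine mul_mem ?_ (ih hs)
      by_cases hik : k = i
      · subst hik
        simp only [hc, Pi.single_zero, rowAddUnit_zero, one_mem]
      · exact rowAddUnit_single_mem_commutator hdiv h2 (Ne.symm hik) _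
  have := key Finset.univ
  simp only [Finset.univ_sum_single] at this
  exact this hc

theorem exists_apply_ne_zero [Nontrivial D] (A : (Matrix ι ι D)ˣ) {s : Finset ι} {k : ι}
    (hk : k ∉ s) (hA : ∀ j ∈ s, ∀ i, A.val i j = if i = j then 1 else 0) :
    ∃ i ∉ s, A.val i k ≠ 0 := by
  by_contra! h
  let v : ι → D := Pi.single k 1 - fun i => if i ∈ s then A.val i k else 0
  have hv : A.val.mulVec v = 0 := by
    ext i
    have : ∀ j, (A.val i j * if j ∈ s then A.val j k else 0) =
        if i = j then (if i ∈ s then A.val i k else 0) else 0 := by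
      intro j
      by_cases hj : j ∈ s
      · rw [hA j hj]
        by_cases hij : i = j
        · subst hij; simp [hj]
        · simp [hij]
      · simp only [hj, if_false, mul_zero]
        split_ifs <;> simp_all
    simp only [v, Matrix.mulVec_sub, Pi.sub_apply, Matrix.mulVec_single_one, Matrix.col_apply]
    simp only [Matrix.mulVec, dotProduct, this, Finset.sum_ite_eq, Finset.mem_univ, if_true]
    by_cases hi : i ∈ s <;> simp [hi, h]
  have hv0 : v = 0 := by
    have := congrArg (A⁻¹.val.mulVec ·) hv
    simpa using this
  have := congrFun hv0 k
  simp [v, hk] at this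

theorem exists_mul_column_eq [Nontrivial D] (hdiv : ∀ x : D, x ≠ 0 → IsUnit x)
    (H : Subgroup (Matrix ι ι D)ˣ) (hH : ∀ k c hc, rowAddUnit k c hc ∈ H)
    (i₀ : ι) (A : (Matrix ι ι D)ˣ) (s : Finset ι) (hs : i₀ ∉ s) :
    ∃ C ∈ H, ∀ j ∈ s, ∀ i, (C * A).val i j = if i = j then 1 else 0 := by
  induction s using Finset.induction_on with
  | empty => exact ⟨1, one_mem _, by simp⟩
  | insert k s hk ih =>
    simp only [Finset.mem_insert, not_or] at hs
    obtain ⟨C₀, hC₀, hA₀⟩ := ih hs.2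
    obtain ⟨C₁, hC₁, hA₁, p, hps, hpk, hp⟩ : ∃ C ∈ H,
        (∀ j ∈ s, ∀ i, (C * A).val i j = if i = j then 1 else 0) ∧
        ∃ p ∉ s, p ≠ k ∧ (C * A).val p k ≠ 0 := by
      by_cases h : ∃ p ∉ s, p ≠ k ∧ (C₀ * A).val p k ≠ 0
      · exact ⟨C₀, hC₀, hA₀, h⟩
      · push Not at h
        obtain ⟨q, hqs, hq⟩ := exists_apply_ne_zero (C₀ * A) hk hA₀
        have hqk : q = k := by
          by_contra hne
          exact hq (h q hqs hne)
        subst hqk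
        refine ⟨rowAddUnit q (Pi.single i₀ 1) (by simp [Ne.symm hs.1]) * C₀,
          mul_mem (hH _ _ _) hC₀, ?_, i₀, hs.2, hs.1, ?_⟩
        · intro j hj i
          have hqj : q ≠ j := fun h => hk (h ▸ hj)
          rw [mul_assoc, Units.val_mul, rowAddUnit_mul_apply, hA₀ j hj, hA₀ j hj]
          simp [hqj]
        · rw [mul_assoc, Units.val_mul, rowAddUnit_mul_apply, h i₀ hs.2 hs.1]
          simpa using hq
    obtain ⟨u, hu⟩ := hdiv _ hp
    obtain ⟨C₂, hC₂, hA₂, hk₂⟩ : ∃ C ∈ H,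
        (∀ j ∈ s, ∀ i, (C * A).val i j = if i = j then 1 else 0) ∧ (C * A).val k k = 1 := by
      refine ⟨rowAddUnit p (Pi.single k ((1 - (C₁ * A).val k k) * (u⁻¹ : Dˣ))) (by simp [hpk]) * C₁,
          mul_mem (hH _ _ _) hC₁, ?_, ?_⟩
      · intro j hj i
        have hpj : p ≠ j := fun h => hps (h ▸ hj)
        rw [mul_assoc, Units.val_mul, rowAddUnit_mul_apply, hA₁ j hj, hA₁ j hj]
        simp [hpj]
      · rw [mul_assoc, Units.val_mul, rowAddUnit_mul_apply, ← hu]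
        simp
    refine ⟨rowAddUnit k (Function.update (fun i => - (C₂ * A).val i k) k 0) (by simp) * C₂,
          mul_mem (hH _ _ _) hC₂, ?_⟩
    intro j hj i
    rw [mul_assoc, Units.val_mul, rowAddUnit_mul_apply]
    rcases Finset.mem_insert.1 hj with rfl | hj
    · rw [hk₂]
      by_cases hij : i = j
      · subst hij; simpa using hk₂
      · simp [hij]
    · have hkj : k ≠ j := fun h => hk (h ▸ hj)
      rw [hA₂ j hj, hA₂ j hj]
      simp [hkj]

theorem exists_mul_diagonalUnits [Nontrivial D] (hdiv : ∀ x : D, x ≠ 0 → IsUnit x)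
    (H : Subgroup (Matrix ι ι D)ˣ) (hH : ∀ k c hc, rowAddUnit k c hc ∈ H)
    (i₀ : ι) (A : (Matrix ι ι D)ˣ) :
    ∃ C ∈ H, ∃ d : Dˣ, A = C * diagonalUnits (Pi.mulSingle i₀ d) := by
  obtain ⟨C, hC, hA⟩ := exists_mul_column_eq hdiv H hH i₀ A (Finset.univ.erase i₀) (by simp)
  obtain ⟨i, hi, hne⟩ := exists_apply_ne_zero (C * A) (k := i₀) (by simp) hA
  obtain rfl : i = i₀ := by simpa using hi
  obtain ⟨d, hd⟩ := hdiv _ hne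
  let R := rowAddUnit i (Function.update (fun p => - ((C * A).val p i * (d⁻¹ : Dˣ))) i 0) (by simp)
  refine ⟨(R * C)⁻¹, inv_mem (mul_mem (hH _ _ _) hC), d, ?_⟩
  rw [eq_inv_mul_iff_mul_eq, mul_assoc]
  ext p q
  rw [Units.val_mul, rowAddUnit_mul_apply, diagonalUnits_val, Matrix.diagonal_apply]
  by_cases hq : q = i
  · subst hq
    rw [← hd]
    by_cases hp : p = q
    · subst hp; simp [hd]
    · simp [hp]
  · have hA' := hA q (by simp [hq])
    rw [hA', hA']
    simp only [Ne.symm hq, if_false, mul_zero, add_zero]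
    by_cases hp : p = q
    · subst hp; simp [hq]
    · simp [hp]

end Elimination

section Graded

open scoped commutatorElement

theorem commutatorElement_central_mul {G : Type*} [Group G] {s t : G} (hs : ∀ g, g * s = s * g)
    (ht : ∀ g, g * t = t * g) (x y : G) : ⁅s * x, t * y⁆ = ⁅x, y⁆ := by
  symm
  rw [commutatorElement_def, commutatorElement_def, eq_mul_inv_iff_mul_eq, eq_mul_inv_iff_mul_eq,
    ← ht y, ← hs x]
  simp only [mul_assoc, inv_mul_cancel_left]
  rw [← mul_assoc t x s, ← ht x, mul_assoc, inv_mul_cancel_left, ← mul_assoc s y t, ← hs y,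
    mul_assoc, hs t]

variable {Γ E : Type*} [AddCommGroup Γ] [DecidableEq Γ] [Ring E] (𝒜 : Γ → AddSubgroup E)
  [GradedRing 𝒜]

theorem eq_neg_of_mul_mem_zero {γ μ : Γ} {x : E} (hx : x ≠ 0) (hγ : x ∈ 𝒜 (γ + μ))
    (h0 : x ∈ 𝒜 0) : μ = -γ :=
  (neg_eq_of_add_eq_zero_right (DirectSum.degree_eq_of_mem_mem 𝒜 hγ h0 hx)).symm

theorem mul_mem_matrixGrade {n : ℕ} {γ μ : Γ} {A B : Matrix (Fin n) (Fin n) E}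
    (hA : A ∈ MatrixGrade 𝒜 (fun _ => (0 : Γ)) γ) (hB : B ∈ MatrixGrade 𝒜 (fun _ => (0 : Γ)) μ) :
    A * B ∈ MatrixGrade 𝒜 (fun _ => (0 : Γ)) (γ + μ) := by
  intro i j
  have hA' : ∀ i j, A i j ∈ 𝒜 γ := fun i j => by simpa using hA i j
  have hB' : ∀ i j, B i j ∈ 𝒜 μ := fun i j => by simpa using hB i j
  simpa [Matrix.mul_apply] using sum_mem fun k _ => SetLike.mul_mem_graded (hA' i k) (hB' k j)

theorem units_inv_mem_neg [Nontrivial E] (Eh : Subgroup Eˣ) (hEh : ∀ u : Eˣ, u ∈ Eh ↔ ∃ γ, u.val ∈ 𝒜 γ)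
    {γ : Γ} {u : Eˣ} (hu : u.val ∈ 𝒜 γ) : (u⁻¹).val ∈ 𝒜 (-γ) := by
  obtain ⟨μ, hμ⟩ := (hEh _).1 (inv_mem ((hEh u).2 ⟨γ, hu⟩))
  have h := SetLike.mul_mem_graded hu hμ
  rw [Units.mul_inv] at h
  exact eq_neg_of_mul_mem_zero 𝒜 one_ne_zero h SetLike.GradedOne.one_mem ▸ hμ

theorem matrix_inv_mem_neg [Nontrivial E] {n : ℕ} (hn : 0 < n) (Sh : Subgroup (Matrix (Fin n) (Fin n) E)ˣ)
    (hSh : ∀ A : (Matrix (Fin n) (Fin n) E)ˣ,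
      A ∈ Sh ↔ ∃ lam, A.val ∈ MatrixGrade 𝒜 (fun _ : Fin n => (0 : Γ)) lam)
    {γ : Γ} {A : (Matrix (Fin n) (Fin n) E)ˣ}
    (hA : A.val ∈ MatrixGrade 𝒜 (fun _ : Fin n => (0 : Γ)) γ) :
    (A⁻¹).val ∈ MatrixGrade 𝒜 (fun _ : Fin n => (0 : Γ)) (-γ) := by
  obtain ⟨μ, hμ⟩ := (hSh _).1 (inv_mem ((hSh A).2 ⟨γ, hA⟩))
  have h := mul_mem_matrixGrade 𝒜 hA hμ ⟨0, hn⟩ ⟨0, hn⟩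
  simp only [Units.mul_inv, Matrix.one_apply_eq, add_zero, sub_zero] at h
  exact eq_neg_of_mul_mem_zero 𝒜 one_ne_zero h SetLike.GradedOne.one_mem ▸ hμ

/-- The inclusion `GLₙ(E₀) → GLₙ(E)`. -/
def gradeZeroMatrixUnits (n : ℕ) :
    (Matrix (Fin n) (Fin n) (SetLike.GradeZero.subring 𝒜))ˣ →* (Matrix (Fin n) (Fin n) E)ˣ :=
  Units.map (SetLike.GradeZero.subring 𝒜).subtype.mapMatrix.toMonoidHom

/-- The inclusion `E₀* → E*`. -/
def gradeZeroUnits : (SetLike.GradeZero.subring 𝒜)ˣ →* Eˣ :=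
  Units.map (SetLike.GradeZero.subring 𝒜).subtype.toMonoidHom

theorem gradeZeroMatrixUnits_apply {n : ℕ}
    (B : (Matrix (Fin n) (Fin n) (SetLike.GradeZero.subring 𝒜))ˣ) (i j : Fin n) :
    (gradeZeroMatrixUnits 𝒜 n B).val i j = B.val i j := rfl

theorem gradeZeroMatrixUnits_mem_matrixGrade {n : ℕ}
    (B : (Matrix (Fin n) (Fin n) (SetLike.GradeZero.subring 𝒜))ˣ) :
    (gradeZeroMatrixUnits 𝒜 n B).val ∈ MatrixGrade 𝒜 (fun _ : Fin n => (0 : Γ)) 0 := fun i j => by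
  rw [gradeZeroMatrixUnits_apply, add_zero, sub_zero]
  exact (B.val i j).2

theorem exists_gradeZeroMatrixUnits_eq {n : ℕ} {A : (Matrix (Fin n) (Fin n) E)ˣ}
    (hA : A.val ∈ MatrixGrade 𝒜 (fun _ : Fin n => (0 : Γ)) 0)
    (hA' : (A⁻¹).val ∈ MatrixGrade 𝒜 (fun _ : Fin n => (0 : Γ)) 0) :
    ∃ B, gradeZeroMatrixUnits 𝒜 n B = A := by
  have h : ∀ i j, A.val i j ∈ 𝒜 0 := fun i j => by simpa using hA i j
  have h' : ∀ i j, (A⁻¹).val i j ∈ 𝒜 0 := fun i j => by simpa using hA' i j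
  have hinj : Function.Injective
      ((SetLike.GradeZero.subring 𝒜).subtype.mapMatrix (m := Fin n)) :=
    Matrix.map_injective Subtype.val_injective
  refine ⟨⟨Matrix.of fun i j => ⟨A.val i j, h i j⟩, Matrix.of fun i j => ⟨(A⁻¹).val i j, h' i j⟩,
    ?_, ?_⟩, ?_⟩
  · apply hinj
    rw [map_mul, map_one]
    exact A.mul_inv
  · apply hinj
    rw [map_mul, map_one]
    exact A.inv_mul
  · ext i j
    rfl

theorem exists_gradeZeroUnits_eq {u : Eˣ} (hu : u.val ∈ 𝒜 0) (hu' : (u⁻¹).val ∈ 𝒜 0) :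
    ∃ d, gradeZeroUnits 𝒜 d = u :=
  ⟨⟨⟨u, hu⟩, ⟨_, hu'⟩, Subtype.ext u.mul_inv, Subtype.ext u.inv_mul⟩, Units.ext rfl⟩

theorem commutator_le_map_gradeZeroUnits [Nontrivial E]
    (hdiv : ∀ (γ : Γ) (x : E), x ∈ 𝒜 γ → x ≠ 0 → IsUnit x)
    (hunram : ∀ γ : Γ, (∃ x : E, x ≠ 0 ∧ x ∈ 𝒜 γ) →
      ∃ x : E, x ≠ 0 ∧ x ∈ 𝒜 γ ∧ x ∈ Set.center E)
    (Eh : Subgroup Eˣ) (hEh : ∀ u : Eˣ, u ∈ Eh ↔ ∃ γ, u.val ∈ 𝒜 γ) :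
    ⁅Eh, Eh⁆ ≤ (commutator (SetLike.GradeZero.subring 𝒜)ˣ).map (gradeZeroUnits 𝒜) := by
  have key : ∀ u ∈ Eh, ∃ t ∈ Subgroup.center Eˣ, ∃ d, u = t * gradeZeroUnits 𝒜 d := by
    intro u hu
    obtain ⟨γ, hγ⟩ := (hEh u).1 hu
    obtain ⟨x, hx0, hxγ, hxc⟩ := hunram γ ⟨u, u.ne_zero, hγ⟩
    obtain ⟨t, rfl⟩ := hdiv γ x hxγ hx0
    have ht := units_inv_mem_neg 𝒜 Eh hEh hxγ
    obtain ⟨d, hd⟩ := exists_gradeZeroUnits_eq 𝒜 (u := t⁻¹ * u)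
      (by simpa using SetLike.mul_mem_graded ht hγ)
      (by simpa using SetLike.mul_mem_graded (units_inv_mem_neg 𝒜 Eh hEh hγ) hxγ)
    refine ⟨t, Subgroup.mem_center_iff.2 fun g => Units.ext ?_, d, by simp [hd]⟩
    exact (Semigroup.mem_center_iff.1 hxc g)
  rw [Subgroup.commutator_le]
  intro a ha b hb
  obtain ⟨s, hs, x, rfl⟩ := key a ha
  obtain ⟨t, ht, y, rfl⟩ := key b hb
  refine ⟨⁅x, y⁆, Subgroup.commutator_mem_commutator (Subgroup.mem_top _) (Subgroup.mem_top _), ?_⟩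
  rw [Subgroup.mem_center_iff] at hs ht
  rw [map_commutatorElement]
  generalize gradeZeroUnits 𝒜 x = x
  generalize gradeZeroUnits 𝒜 y = y
  exact (commutatorElement_central_mul hs ht x y).symm

theorem gradeZeroMatrixUnits_diagonalUnits {n : ℕ}
    (u : Fin n → (SetLike.GradeZero.subring 𝒜)ˣ) :
    gradeZeroMatrixUnits 𝒜 n (diagonalUnits u) =
      diagonalUnits fun i => gradeZeroUnits 𝒜 (u i) := by
  ext i j
  rw [gradeZeroMatrixUnits_apply, diagonalUnits_val, diagonalUnits_val, Matrix.diagonal_apply,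
    Matrix.diagonal_apply]
  split_ifs <;> rfl

end Graded

theorem detE_diagonal {E : Type*} [Ring E] {n : ℕ} (Eh : Subgroup Eˣ)
    (Sh : Subgroup (Matrix (Fin n) (Fin n) E)ˣ)
    (detE : ↥Sh →* Abelianization ↥Eh)
    (hdetE : ∀ (A : ↥Sh) (T : Matrix (Fin n) (Fin n) E) (u : Fin n → E)
      (π : Equiv.Perm (Fin n)) (V : Matrix (Fin n) (Fin n) E),
      UnipotentLower T → (∀ i, IsUnit (u i)) → UnipotentUpper V →
      UnipotentUpper (π.permMatrix E * V * (π⁻¹).permMatrix E) →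
      A.val.val = T * Matrix.diagonal u * π.permMatrix E * V →
      ∀ w : ↥Eh,
        w.val.val = ((Equiv.Perm.sign π : ℤ) : E) * (List.ofFn u).prod →
        detE A = Abelianization.of w)
    (A : Sh) (u : Fin n → Eˣ) (hA : A.val = diagonalUnits u) (w : Eh)
    (hw : w.val = (List.ofFn u).prod) : detE A = Abelianization.of w := by
  have h1 : UnipotentUpper (1 : Matrix (Fin n) (Fin n) E) :=
    ⟨fun i j h => Matrix.one_apply_ne h.ne', fun i => Matrix.one_apply_eq i⟩
  have h2 : UnipotentLower (1 : Matrix (Fin n) (Fin n) E) :=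
    ⟨fun i j h => Matrix.one_apply_ne h.ne, fun i => Matrix.one_apply_eq i⟩
  refine hdetE A 1 (fun i => u i) 1 1 h2 (fun i => (u i).isUnit) h1 ?_ ?_ w ?_
  · simpa [Matrix.permMatrix_one] using h1
  · simp [hA, diagonalUnits_val, Matrix.permMatrix_one]
  · rw [hw, ← Units.coeHom_apply, map_list_prod, List.map_ofFn]
    simp [Function.comp_def]

/-- let `E` be a `Γ`-graded division ring, unramified over its center
(`Γ_E = Γ_T`), with `Γ` having no nonzero `n`-torsion and `Mₙ(E₀) ≠ M₂(𝔽₂)`, and let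
`S = Mₙ(E)` with the unshifted grading.  Then the kernel of the homogeneous Dieudonné
determinant `det_E` equals `[GLₙ^h(E), GLₙ^h(E)]`, so `det_E` induces an injection
`GLₙ^h(E)/[GLₙ^h(E), GLₙ^h(E)] ↪ E_h*/[E_h*, E_h*]`. -/
theorem ker_det_eq_commutator_unramified {Γ E : Type*} [AddCommGroup Γ] [DecidableEq Γ]
    [Ring E] [Nontrivial E] (𝒜 : Γ → AddSubgroup E) [GradedRing 𝒜]
    (hdiv : ∀ (γ : Γ) (x : E), x ∈ 𝒜 γ → x ≠ 0 → IsUnit x)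
    {n : ℕ} (hn : 0 < n)
    -- `Γ` has no nonzero `n`-torsion
    (htf : ∀ γ : Γ, n • γ = 0 → γ = 0)
    -- `E` is unramified over its center `T = Z(E)`, i.e. `Γ_E = Γ_T`
    (hunram : ∀ γ : Γ, (∃ x : E, x ≠ 0 ∧ x ∈ 𝒜 γ) →
      ∃ x : E, x ≠ 0 ∧ x ∈ 𝒜 γ ∧ x ∈ Set.center E)
    -- `Mₙ(E₀) ≠ M₂(𝔽₂)`
    (hF2 : ¬(n = 2 ∧ ∀ x ∈ 𝒜 (0 : Γ), x = 0 ∨ x = 1))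
    (Eh : Subgroup Eˣ) (hEh : ∀ u : Eˣ, u ∈ Eh ↔ ∃ γ, u.val ∈ 𝒜 γ)
    -- `Sh = GLₙ^h(E)`, the homogeneous units for the unshifted grading
    (Sh : Subgroup (Matrix (Fin n) (Fin n) E)ˣ)
    (hSh : ∀ A : (Matrix (Fin n) (Fin n) E)ˣ,
      A ∈ Sh ↔ ∃ lam, A.val ∈ MatrixGrade 𝒜 (fun _ : Fin n => (0 : Γ)) lam)
    -- `detE` is the homogeneous Dieudonné determinant, characterized via strict
    -- Bruhat normal forms
    (detE : ↥Sh →* Abelianization ↥Eh)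
    (hdetE : ∀ (A : ↥Sh) (T : Matrix (Fin n) (Fin n) E) (u : Fin n → E)
      (π : Equiv.Perm (Fin n)) (V : Matrix (Fin n) (Fin n) E),
      UnipotentLower T → (∀ i, IsUnit (u i)) → UnipotentUpper V →
      UnipotentUpper (π.permMatrix E * V * (π⁻¹).permMatrix E) →
      A.val.val = T * Matrix.diagonal u * π.permMatrix E * V →
      ∀ w : ↥Eh,
        w.val.val = ((Equiv.Perm.sign π : ℤ) : E) * (List.ofFn u).prod →
        detE A = Abelianization.of w) :
    (∀ A : ↥Sh, detE A = 1 ↔ A.val ∈ ⁅Sh, Sh⁆) ∧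
    ∃ g : Abelianization ↥Sh →* Abelianization ↥Eh,
      Function.Injective g ∧ ∀ A : ↥Sh, g (Abelianization.of A) = detE A := by
  obtain ⟨m, rfl⟩ : ∃ m, n = m + 1 := ⟨n - 1, by omega⟩
  let D := SetLike.GradeZero.subring 𝒜
  have hEh0 : ∀ d : Dˣ, gradeZeroUnits 𝒜 d ∈ Eh := fun d => (hEh _).2 ⟨0, d.val.2⟩
  have hD : ∀ x : D, x ≠ 0 → IsUnit x := by
    intro x hx
    obtain ⟨u, hu⟩ := hdiv 0 x x.2 (fun h => hx (Subtype.ext h))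
    have hu0 : u.val ∈ 𝒜 0 := hu ▸ x.2
    obtain ⟨d, hd⟩ := exists_gradeZeroUnits_eq 𝒜 hu0
      (by simpa using units_inv_mem_neg 𝒜 Eh hEh hu0)
    exact ⟨d, Subtype.ext ((congrArg Units.val hd).trans hu)⟩
  have h2 : Fintype.card (Fin (m + 1)) ≠ 2 ∨ ∃ x : D, x ≠ 0 ∧ x ≠ 1 := by
    by_contra! h
    refine hF2 ⟨by simpa using h.1, fun x hx => ?_⟩
    by_cases hx0 : x = 0
    · exact Or.inl hx0
    · exact Or.inr (congrArg Subtype.val (h.2 ⟨x, hx⟩ fun h => hx0 (congrArg Subtype.val h)))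
  have hcomm : (commutator (Matrix (Fin (m + 1)) (Fin (m + 1)) D)ˣ).map
      (gradeZeroMatrixUnits 𝒜 (m + 1)) ≤ ⁅Sh, Sh⁆ := by
    rw [commutator_def, Subgroup.map_commutator]
    have : Subgroup.map (gradeZeroMatrixUnits 𝒜 (m + 1)) ⊤ ≤ Sh := by
      rintro _ ⟨B, -, rfl⟩
      exact (hSh _).2 ⟨0, gradeZeroMatrixUnits_mem_matrixGrade 𝒜 B⟩
    exact Subgroup.commutator_mono this this
  have hdec : ∀ (γ : Γ) (t : Eˣ) (A : (Matrix (Fin (m + 1)) (Fin (m + 1)) E)ˣ), t.val ∈ 𝒜 γ →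
      t.val ∈ Set.center E → A.val ∈ MatrixGrade 𝒜 (fun _ => (0 : Γ)) γ →
      ∃ C ∈ ⁅Sh, Sh⁆, ∃ d : Dˣ,
        A = C * diagonalUnits ((fun _ => t) * Pi.mulSingle 0 (gradeZeroUnits 𝒜 d)) := by
    intro γ t A ht htc hA
    have hdiag : ∀ (μ : Γ) (s : Eˣ), s.val ∈ 𝒜 μ →
        (diagonalUnits fun _ : Fin (m + 1) => s).val ∈ MatrixGrade 𝒜 (fun _ => (0 : Γ)) μ := by
      intro μ s hs i j
      rw [diagonalUnits_val, Matrix.diagonal_apply]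
      split_ifs
      · simpa using hs
      · exact zero_mem _
    have hdeg : ((diagonalUnits fun _ => t)⁻¹ * A).val ∈ MatrixGrade 𝒜 (fun _ => (0 : Γ)) 0 := by
      have h := mul_mem_matrixGrade 𝒜 (hdiag (-γ) t⁻¹ (units_inv_mem_neg 𝒜 Eh hEh ht)) hA
      rw [neg_add_cancel] at h
      rwa [← map_inv]
    obtain ⟨B, hB⟩ := exists_gradeZeroMatrixUnits_eq 𝒜 hdeg
      (by simpa only [neg_zero] using matrix_inv_mem_neg 𝒜 hn Sh hSh hdeg)
    obtain ⟨C, hC, d, rfl⟩ := exists_mul_diagonalUnits hD _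
      (fun k c hc => rowAddUnit_mem_commutator hD h2 k c hc) 0 B
    refine ⟨_, hcomm ⟨C, hC, rfl⟩, d, ?_⟩
    have hcen : ∀ M : (Matrix (Fin (m + 1)) (Fin (m + 1)) E)ˣ,
        (diagonalUnits fun _ => t) * M = M * diagonalUnits fun _ => t := by
      intro M
      ext i j
      simp only [Units.val_mul, diagonalUnits_val, Matrix.diagonal_mul, Matrix.mul_diagonal]
      exact (Semigroup.mem_center_iff.1 htc _).symm
    rw [map_mul, eq_inv_mul_iff_mul_eq, gradeZeroMatrixUnits_diagonalUnits] at hB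
    rw [← hB, map_mul, ← mul_assoc, ← mul_assoc, hcen]
    congr 2
    funext i
    exact Pi.apply_mulSingle (fun _ => gradeZeroUnits 𝒜) (fun _ => map_one _) 0 d i
  have hdet : ∀ (γ : Γ) (t : Eˣ) (A : Sh) (C : (Matrix (Fin (m + 1)) (Fin (m + 1)) E)ˣ) (d : Dˣ),
      t.val ∈ 𝒜 γ → C ∈ ⁅Sh, Sh⁆ →
      A.val = C * diagonalUnits ((fun _ => t) * Pi.mulSingle 0 (gradeZeroUnits 𝒜 d)) →
      detE A = 1 → t * gradeZeroUnits 𝒜 d * t ^ m ∈ ⁅Eh, Eh⁆ := by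
    intro γ t A C d ht hC hA h1
    rw [← Subgroup.map_subtype_commutator] at hC ⊢
    obtain ⟨C, hC, rfl⟩ := hC
    have htE : t ∈ Eh := (hEh t).2 ⟨γ, ht⟩
    refine ⟨⟨_, mul_mem (mul_mem htE (hEh0 d)) (pow_mem htE m)⟩, ?_, rfl⟩
    rw [← Abelianization.ker_of, SetLike.mem_coe, MonoidHom.mem_ker, ← h1,
      ← detE_diagonal Eh Sh detE hdetE (C⁻¹ * A) _ (by
        rw [Subgroup.coe_mul, Subgroup.coe_inv, hA]; exact inv_mul_cancel_left _ _),
      map_mul, map_inv,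
      MonoidHom.mem_ker.1 (Abelianization.commutator_subset_ker detE hC), inv_one, one_mul]
    simp [List.ofFn_succ, List.ofFn_const]
  have hsub := commutator_le_map_gradeZeroUnits 𝒜 hdiv hunram Eh hEh
  have hker : ∀ A : Sh, detE A = 1 ↔ A.val ∈ ⁅Sh, Sh⁆ := by
    intro A
    constructor
    · intro h1
      obtain ⟨γ, hγ⟩ := (hSh _).1 A.2
      obtain ⟨i, j, hij⟩ : ∃ i j, A.val.val i j ≠ 0 := by
        by_contra! h
        exact A.val.ne_zero (Matrix.ext h)
      obtain ⟨x, hx0, hxγ, hxc⟩ := hunram γ ⟨_, hij, by simpa using hγ i j⟩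
      obtain ⟨t, rfl⟩ := hdiv γ x hxγ hx0
      obtain ⟨C, hC, d, hA⟩ := hdec γ t A hxγ hxc hγ
      obtain rfl : γ = 0 := by
        obtain ⟨d', -, hd'⟩ := hsub (hdet γ t A C d hxγ hC hA h1)
        refine htf γ ?_
        have hmem : (t * gradeZeroUnits 𝒜 d * t ^ m).val ∈ 𝒜 (γ + 0 + m • γ) :=
          SetLike.mul_mem_graded (SetLike.mul_mem_graded hxγ d.val.2) (SetLike.pow_mem_graded m hxγ)
        have h0 : (gradeZeroUnits 𝒜 d').val ∈ 𝒜 0 := d'.val.2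
        rw [hd'] at h0
        have := DirectSum.degree_eq_of_mem_mem 𝒜 hmem h0 (Units.ne_zero _)
        rwa [add_zero, add_comm, ← succ_nsmul] at this
      have h1mem : (1 : Eˣ).val ∈ 𝒜 0 := SetLike.GradedOne.one_mem
      obtain ⟨C, hC, d, hA⟩ := hdec 0 1 A h1mem (Set.one_mem_center) hγ
      have hd := hdet 0 1 A C d h1mem hC hA h1
      rw [one_pow, one_mul, mul_one] at hd
      obtain ⟨d', hd', heq⟩ := hsub hd
      obtain rfl : d' = d := Units.ext (Subtype.ext (congrArg Units.val heq))
      rw [hA]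
      refine mul_mem hC (hcomm ⟨diagonalUnits (Pi.mulSingle 0 d'), ?_, ?_⟩)
      · have := Subgroup.mem_map_of_mem
          (diagonalUnits.comp (MonoidHom.mulSingle (fun _ : Fin (m + 1) => Dˣ) 0)) hd'
        rw [commutator_def, Subgroup.map_commutator] at this
        exact Subgroup.commutator_mono le_top le_top this
      · rw [gradeZeroMatrixUnits_diagonalUnits]
        congr 1
        funext i
        simpa using Pi.apply_mulSingle (fun _ => gradeZeroUnits 𝒜) (fun _ => map_one _) 0 d' i
    · intro hA
      rw [← Subgroup.map_subtype_commutator] at hA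
      obtain ⟨C, hC, hCA⟩ := hA
      obtain rfl : C = A := Subtype.ext hCA
      exact MonoidHom.mem_ker.1 (Abelianization.commutator_subset_ker detE hC)
  refine ⟨hker, Abelianization.lift detE, ?_, fun A => Abelianization.lift_apply_of detE A⟩
  rw [injective_iff_map_eq_one]
  intro a
  induction a using QuotientGroup.induction_on with
  | H A =>
    intro h
    have hA := (hker A).1 h
    rw [← Subgroup.map_subtype_commutator] at hA
    obtain ⟨C, hC, hCA⟩ := hA
    obtain rfl : C = A := Subtype.ext hCA
    exact (QuotientGroup.eq_one_iff C).2 hC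
end
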